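/- arXiv:2009.12594 — 4 statements merged into one kernel-verified Lean document; each statement's English description precedes it below -/
import Mathlib

section
/- Let w₁, w₂ > 0 and 0 < a < (w₁+w₂)/2, and define G₂(a,w,t) = e^{(w₁+w₂−a)t}/((e^{w₁t}−1)(e^{w₂t}−1)) − 1/(w₁w₂t²) for t > 0. Then ∫₀^∞ G₂(a,w,t) t^{σ−1} dt tends to +∞ as σ tends to 1 from the right (σ ∈ (1,2)). -/
open MeasureTheory Real Set Filter

/-- The Barnes `G₂` kernel:
`G₂(a, w, t) = e^{(w₁+w₂−a)t}/((e^{w₁t}−1)(e^{w₂t}−1)) − 1/(w₁w₂t²)`. -/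
noncomputable def G₂ (a w₁ w₂ t : ℝ) : ℝ :=
  Real.exp ((w₁ + w₂ - a) * t) / ((Real.exp (w₁ * t) - 1) * (Real.exp (w₂ * t) - 1))
    - 1 / (w₁ * w₂ * t ^ 2)

open Topology Asymptotics

/-- the function `(exp x - 1) / x`, extended by `1` at `0` -/
noncomputable def phiAux (x : ℝ) : ℝ := if x = 0 then 1 else (Real.exp x - 1) / x

lemma phiAux_zero : phiAux 0 = 1 := by simp [phiAux]

lemma phiAux_hasDerivAt : HasDerivAt phiAux (1 / 2) 0 := by
  have h := Real.exp_sub_sum_range_succ_isLittleO_pow 2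
  simp only [Finset.sum_range_succ, Finset.sum_range_zero] at h
  have h2 := h.tendsto_div_nhds_zero
  rw [hasDerivAt_iff_tendsto_slope]
  have h3 : Tendsto (fun x : ℝ => (Real.exp x - (0 + x ^ 0 / (Nat.factorial 0 : ℝ) +
      x ^ 1 / (Nat.factorial 1 : ℝ) + x ^ 2 / (Nat.factorial 2 : ℝ))) / x ^ 2 + 1 / 2)
      (𝓝[≠] 0) (𝓝 (0 + 1 / 2)) :=
    (h2.mono_left nhdsWithin_le_nhds).add_const _
  rw [zero_add] at h3
  refine h3.congr' ?_
  filter_upwards [self_mem_nhdsWithin] with x hx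
  have hx' : x ≠ 0 := hx
  simp only [slope, phiAux, hx', if_true, if_false, vsub_eq_sub, smul_eq_mul, sub_zero,
    Nat.factorial]
  field_simp
  push_cast
  ring

lemma G2_bot (w₁ w₂ a : ℝ) (hw₁ : 0 < w₁) (hw₂ : 0 < w₂) :
    Tendsto (fun t => G₂ a w₁ w₂ t * t) (𝓝[>] 0) (𝓝 ((w₁ + w₂ - 2 * a) / (2 * w₁ * w₂))) := by
  have h1 : HasDerivAt (fun t => phiAux (w₁ * t)) (1 / 2 * w₁) 0 := by
    have hl : HasDerivAt (fun t : ℝ => w₁ * t) w₁ 0 := by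
      simpa using (hasDerivAt_id (0 : ℝ)).const_mul w₁
    refine HasDerivAt.comp (h₂ := phiAux) (0 : ℝ) ?_ hl
    simpa using phiAux_hasDerivAt
  have h2 : HasDerivAt (fun t => phiAux (w₂ * t)) (1 / 2 * w₂) 0 := by
    have hl : HasDerivAt (fun t : ℝ => w₂ * t) w₂ 0 := by
      simpa using (hasDerivAt_id (0 : ℝ)).const_mul w₂
    refine HasDerivAt.comp (h₂ := phiAux) (0 : ℝ) ?_ hl
    simpa using phiAux_hasDerivAt
  have h0 : HasDerivAt (fun t => Real.exp ((w₁ + w₂ - a) * t)) (w₁ + w₂ - a) 0 := by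
    have hl : HasDerivAt (fun t : ℝ => (w₁ + w₂ - a) * t) (w₁ + w₂ - a) 0 := by
      simpa using (hasDerivAt_id (0 : ℝ)).const_mul (w₁ + w₂ - a)
    simpa using hl.exp
  have h := h0.div (h1.mul h2) (by simp [phiAux_zero])
  have hs := (h.tendsto_slope.mono_left
    (nhdsWithin_mono (s := Ioi (0 : ℝ)) (0 : ℝ) (fun x (hx : 0 < x) => (hx.ne' : x ≠ 0)))).mul_const (1 / (w₁ * w₂))
  have e : (w₁ + w₂ - 2 * a) / (2 * w₁ * w₂) = ((w₁ + w₂ - a) * (1 * 1) - 1 *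
      (1 / 2 * w₁ * 1 + 1 * (1 / 2 * w₂))) / (1 * 1) ^ 2 * (1 / (w₁ * w₂)) := by
    field_simp
    ring
  rw [e]
  simp only [Pi.mul_apply, mul_zero, phiAux_zero, Real.exp_zero] at hs
  refine hs.congr' ?_
  filter_upwards [self_mem_nhdsWithin] with t ht
  have ht : 0 < t := ht
  have e1 : Real.exp (w₁ * t) - 1 ≠ 0 := by
    have := Real.add_one_lt_exp (mul_pos hw₁ ht).ne'
    have := mul_pos hw₁ ht
    linarith
  have e2 : Real.exp (w₂ * t) - 1 ≠ 0 := by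
    have := Real.add_one_lt_exp (mul_pos hw₂ ht).ne'
    have := mul_pos hw₂ ht
    linarith
  simp only [slope, G₂, Pi.div_apply, Pi.mul_apply, mul_zero, phiAux_zero, Real.exp_zero, phiAux,
    (mul_pos hw₁ ht).ne', (mul_pos hw₂ ht).ne', if_false, vsub_eq_sub, smul_eq_mul, sub_zero,
    if_true]
  field_simp

lemma G2_top (w₁ w₂ a : ℝ) (hw₁ : 0 < w₁) (hw₂ : 0 < w₂) (ha : 0 < a) :
    Tendsto (fun t => G₂ a w₁ w₂ t * t ^ 2) atTop (𝓝 (0 / ((1 - 0) * (1 - 0)) - 1 / (w₁ * w₂))) := by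
  have hE : ∀ w : ℝ, 0 < w → Tendsto (fun t : ℝ => Real.exp (-(w * t))) atTop (𝓝 0) := fun w hw =>
    Real.tendsto_exp_neg_atTop_nhds_zero.comp (tendsto_id.const_mul_atTop hw)
  have hn : Tendsto (fun t : ℝ => t ^ 2 * Real.exp (-(a * t))) atTop (𝓝 0) := by
    have h := (Real.tendsto_pow_mul_exp_neg_atTop_nhds_zero 2).comp
      (tendsto_id.const_mul_atTop ha)
    have h' := h.const_mul (1 / a ^ 2)
    rw [mul_zero] at h'
    refine h'.congr fun t => ?_
    simp only [Function.comp, id]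
    field_simp
  have h := (hn.div (((hE w₁ hw₁).const_sub 1).mul ((hE w₂ hw₂).const_sub 1))
    (by norm_num)).sub_const (1 / (w₁ * w₂))
  refine h.congr' ?_
  filter_upwards [eventually_gt_atTop 0] with t ht
  have e1 : Real.exp (w₁ * t) - 1 ≠ 0 := by
    have := Real.add_one_lt_exp (mul_pos hw₁ ht).ne'
    have := mul_pos hw₁ ht
    linarith
  have e2 : Real.exp (w₂ * t) - 1 ≠ 0 := by
    have := Real.add_one_lt_exp (mul_pos hw₂ ht).ne'
    have := mul_pos hw₂ ht
    linarith
  have e3 : Real.exp ((w₁ + w₂ - a) * t) =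
      Real.exp (w₁ * t) * Real.exp (w₂ * t) * Real.exp (-(a * t)) := by
    rw [← Real.exp_add, ← Real.exp_add]; ring_nf
  have e4 : ∀ x : ℝ, 1 - Real.exp (-x) = (Real.exp x - 1) / Real.exp x := fun x => by
    rw [Real.exp_neg]; field_simp
  simp only [Pi.div_apply, Pi.mul_apply, G₂]
  rw [e3, e4, e4]
  field_simp

lemma G2_cont (w₁ w₂ a : ℝ) (hw₁ : 0 < w₁) (hw₂ : 0 < w₂) :
    ContinuousOn (G₂ a w₁ w₂) (Ioi 0) := by
  have e : ∀ w : ℝ, 0 < w → ∀ t : ℝ, 0 < t → Real.exp (w * t) - 1 ≠ 0 := by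
    intro w hw t ht
    have := Real.add_one_lt_exp (mul_pos hw ht).ne'
    have := mul_pos hw ht
    linarith
  unfold G₂
  refine ContinuousOn.sub (ContinuousOn.div (by fun_prop) (by fun_prop) ?_)
    (ContinuousOn.div (by fun_prop) (by fun_prop) ?_)
  · intro t ht
    exact mul_ne_zero (e _ hw₁ _ ht) (e _ hw₂ _ ht)
  · intro t ht
    have : (0 : ℝ) < t := ht
    positivity

lemma G2_int (w₁ w₂ a : ℝ) (hw₁ : 0 < w₁) (hw₂ : 0 < w₂) (ha : 0 < a) (s : ℝ) (h1 : 1 < s)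
    (h2 : s < 2) : IntegrableOn (fun t => G₂ a w₁ w₂ t * t ^ (s - 1)) (Ioi 0) := by
  have h := mellin_convergent_of_isBigO_scalar (a := 2) (b := 1) (f := G₂ a w₁ w₂) (s := s)
    ((G2_cont w₁ w₂ a hw₁ hw₂).locallyIntegrableOn measurableSet_Ioi) ?_ h2 ?_ h1
  · simpa only [mul_comm] using h
  · have := ((G2_top w₁ w₂ a hw₁ hw₂ ha).isBigO_one ℝ).mul
      (isBigO_refl (fun t : ℝ => t ^ (-2 : ℝ)) atTop)
    refine this.congr' ?_ (by simp)
    filter_upwards [eventually_gt_atTop 0] with t ht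
    rw [Real.rpow_neg ht.le, Real.rpow_two]
    field_simp
  · have := ((G2_bot w₁ w₂ a hw₁ hw₂).isBigO_one ℝ).mul
      (isBigO_refl (fun t : ℝ => t ^ (-1 : ℝ)) (𝓝[>] 0))
    refine this.congr' ?_ (by simp)
    filter_upwards [self_mem_nhdsWithin] with t ht
    have ht : 0 < t := ht
    rw [Real.rpow_neg ht.le, Real.rpow_one]
    field_simp

theorem stmt7 (w₁ w₂ a : ℝ) (hw₁ : 0 < w₁) (hw₂ : 0 < w₂)
    (ha : 0 < a) (ha' : a < (w₁ + w₂) / 2) :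
    Filter.Tendsto (fun σ : ℝ => ∫ t in Set.Ioi (0 : ℝ), G₂ a w₁ w₂ t * t ^ (σ - 1))
      (nhdsWithin 1 (Set.Ioo (1 : ℝ) 2)) Filter.atTop := by
  obtain ⟨c, hc, hcl⟩ : ∃ c, 0 < c ∧ c < (w₁ + w₂ - 2 * a) / (2 * w₁ * w₂) :=
    exists_between (div_pos (by linarith) (by positivity))
  have hev := (G2_bot w₁ w₂ a hw₁ hw₂).eventually (lt_mem_nhds hcl)
  obtain ⟨d, hd, hd'⟩ := (mem_nhdsGT_iff_exists_Ioc_subset).1 hev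
  have hd : 0 < d := hd
  set K : ℝ := 1 / (w₁ * w₂) with hK
  have hlow : ∀ s ∈ Ioo (1 : ℝ) 2, c * (d ^ (s - 1) / (s - 1)) + (-K) * (-d ^ (s - 2) / (s - 2)) ≤
      ∫ t in Set.Ioi (0 : ℝ), G₂ a w₁ w₂ t * t ^ (s - 1) := by
    rintro s ⟨h1, h2⟩
    have hint := G2_int w₁ w₂ a hw₁ hw₂ ha s h1 h2
    have hi1 : IntegrableOn (fun t : ℝ => t ^ (s - 2)) (Ioc 0 d) :=
      (intervalIntegrable_iff_integrableOn_Ioc_of_le hd.le).1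
        (intervalIntegral.intervalIntegrable_rpow' (by linarith))
    have hi2 : IntegrableOn (fun t : ℝ => t ^ (s - 3)) (Ioi d) :=
      integrableOn_Ioi_rpow_of_lt (by linarith) hd
    have hu : Ioi (0 : ℝ) = Ioc 0 d ∪ Ioi d := (Ioc_union_Ioi_eq_Ioi hd.le).symm
    have s1 : Ioc 0 d ⊆ Ioi (0 : ℝ) := Ioc_subset_Ioi_self
    have s2 : Ioi d ⊆ Ioi (0 : ℝ) := Ioi_subset_Ioi hd.le
    rw [hu, setIntegral_union (Ioc_disjoint_Ioi le_rfl) measurableSet_Ioi (hint.mono_set s1)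
      (hint.mono_set s2)]
    have v1 : ∫ t in Ioc 0 d, t ^ (s - 2) = d ^ (s - 1) / (s - 1) := by
      rw [← intervalIntegral.integral_of_le hd.le, integral_rpow (Or.inl (by linarith)),
        show s - 2 + 1 = s - 1 by ring, Real.zero_rpow (by linarith), sub_zero]
    have v2 : ∫ t in Ioi d, t ^ (s - 3) = -d ^ (s - 2) / (s - 2) := by
      rw [integral_Ioi_rpow_of_lt (by linarith) hd, show s - 3 + 1 = s - 2 by ring]
    rw [← v1, ← v2, ← integral_const_mul, ← integral_const_mul]
    refine add_le_add (setIntegral_mono_on (hi1.const_mul c) (hint.mono_set s1) measurableSet_Ioc ?_)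
      (setIntegral_mono_on (hi2.const_mul (-K)) (hint.mono_set s2) measurableSet_Ioi ?_)
    · intro t ht
      have hg : c < G₂ a w₁ w₂ t * t := hd' ht
      have ht0 : 0 < t := ht.1
      have : t ^ (s - 1) = t * t ^ (s - 2) := by
        rw [show s - 1 = 1 + (s - 2) by ring, Real.rpow_add ht0, Real.rpow_one]
      rw [this, ← mul_assoc]
      gcongr
    · intro t ht
      have ht0 : 0 < t := hd.trans ht
      have : t ^ (s - 1) = t ^ 2 * t ^ (s - 3) := by
        rw [show s - 1 = 2 + (s - 3) by ring, Real.rpow_add ht0, Real.rpow_two]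
      rw [this, ← mul_assoc]
      have hg : -K ≤ G₂ a w₁ w₂ t * t ^ 2 := by
        have e : ∀ w : ℝ, 0 < w → 0 < Real.exp (w * t) - 1 := by
          intro w hw
          have := Real.add_one_lt_exp (mul_pos hw ht0).ne'
          have := mul_pos hw ht0
          linarith
        have p1 := e _ hw₁
        have p2 := e _ hw₂
        have p3 : 0 ≤ Real.exp ((w₁ + w₂ - a) * t) /
          ((Real.exp (w₁ * t) - 1) * (Real.exp (w₂ * t) - 1)) * t ^ 2 := by positivity
        have p4 : 1 / (w₁ * w₂ * t ^ 2) * t ^ 2 = K := by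
          rw [hK]; field_simp
        rw [G₂, sub_mul, p4]
        linarith
      gcongr
  refine tendsto_atTop_mono' _ (eventually_mem_nhdsWithin.mono hlow) ?_
  have hle : 𝓝[Ioo (1 : ℝ) 2] 1 ≤ 𝓝 1 := nhdsWithin_le_nhds
  refine Tendsto.atTop_add (C := (-K) * (-d ^ ((1 : ℝ) - 2) / (1 - 2))) ?_ ?_
  · refine Tendsto.const_mul_atTop hc ?_
    have t1 : Tendsto (fun s : ℝ => d ^ (s - 1)) (𝓝[Ioo (1 : ℝ) 2] 1) (𝓝 1) := by
      have : ContinuousAt (fun s : ℝ => d ^ (s - 1)) 1 :=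
        ContinuousAt.rpow continuousAt_const (by fun_prop) (Or.inl hd.ne')
      have h := this.tendsto
      simp only [sub_self, Real.rpow_zero] at h
      exact h.mono_left hle
    have t2 : Tendsto (fun s : ℝ => (s - 1)⁻¹) (𝓝[Ioo (1 : ℝ) 2] 1) atTop := by
      refine tendsto_inv_nhdsGT_zero.comp (tendsto_nhdsWithin_iff.2 ⟨?_, ?_⟩)
      · have : ContinuousAt (fun s : ℝ => s - 1) 1 := by fun_prop
        have h := this.tendsto
        simp only [sub_self] at h
        exact h.mono_left hle
      · filter_upwards [self_mem_nhdsWithin] with s hs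
        exact sub_pos.2 hs.1
    simpa only [div_eq_mul_inv] using t1.pos_mul_atTop one_pos t2
  · have : ContinuousAt (fun s : ℝ => (-K) * (-d ^ (s - 2) / (s - 2))) 1 := by
      refine ContinuousAt.mul continuousAt_const (ContinuousAt.div (ContinuousAt.neg
        (ContinuousAt.rpow continuousAt_const (by fun_prop) (Or.inl hd.ne'))) (by fun_prop)
        (by norm_num))
    exact this.tendsto.mono_left hle
end

section
/- Let w₁, w₂ > 0 and a ≥ (w₁+w₂)/2. Then for every t > 0, G₂(a,w,t) = e^{(w₁+w₂−a)t}/((e^{w₁t}−1)(e^{w₂t}−1)) − 1/(w₁w₂t²) < 0. -/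
open Real

theorem aux_exp (x : ℝ) (hx : 0 < x) : x * Real.exp (x / 2) < Real.exp x - 1 := by
  have h := Real.self_lt_sinh_iff.2 (half_pos hx)
  rw [Real.sinh_eq] at h
  have hp := Real.exp_pos (x / 2)
  have h1 : Real.exp x = Real.exp (x / 2) * Real.exp (x / 2) := by
    rw [← Real.exp_add]; ring_nf
  have h2 : Real.exp (x / 2) * Real.exp (-(x / 2)) = 1 := by
    rw [← Real.exp_add]; simp
  have h3 := mul_lt_mul_of_pos_left h hp
  linarith

theorem stmt12 (w₁ w₂ a : ℝ) (hw₁ : 0 < w₁) (hw₂ : 0 < w₂)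
    (ha : (w₁ + w₂) / 2 ≤ a) (t : ℝ) (ht : 0 < t) :
    G₂ a w₁ w₂ t < 0 := by
  have p1 : 0 < w₁ * t := mul_pos hw₁ ht
  have p2 : 0 < w₂ * t := mul_pos hw₂ ht
  have h1 := aux_exp _ p1
  have h2 := aux_exp _ p2
  have q1 : 0 < w₁ * t * Real.exp (w₁ * t / 2) := by positivity
  have q2 : 0 < w₂ * t * Real.exp (w₂ * t / 2) := by positivity
  have h3 := mul_lt_mul'' h1 h2 q1.le q2.le
  have h4 : Real.exp ((w₁ + w₂ - a) * t)
      ≤ Real.exp (w₁ * t / 2) * Real.exp (w₂ * t / 2) := by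
    rw [← Real.exp_add]
    apply Real.exp_le_exp.2
    nlinarith [mul_le_mul_of_nonneg_right ha ht.le]
  have h5 := mul_le_mul_of_nonneg_left h4 (mul_pos p1 p2).le
  unfold G₂
  rw [sub_neg, div_lt_div_iff₀ (mul_pos (q1.trans h1) (q2.trans h2)) (by positivity)]
  linarith
end

section
/- Let w₁, w₂ > 0 and 0 < a < (w₁+w₂)/2, and define G₂(a,w,t) = e^{(w₁+w₂−a)t}/((e^{w₁t}−1)(e^{w₂t}−1)) − 1/(w₁w₂t²) for t > 0. Then there exists t₀ > 0 such that G₂(a,w,t₀) = 0, G₂(a,w,t) > 0 for all 0 < t < t₀, and G₂(a,w,t) < 0 for all t > t₀. -/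
open Real

/-- `log (sinh x / x)`; the value at `0` is `0` by convention. -/
noncomputable def LS (x : ℝ) : ℝ := Real.log (Real.sinh x / x)

lemma LS_zero : LS 0 = 0 := by simp [LS]

lemma sinh_le_mul_cosh {x : ℝ} (hx : 0 ≤ x) : Real.sinh x ≤ x * Real.cosh x := by
  have hd : ∀ y : ℝ, HasDerivAt (fun y => y * Real.cosh y - Real.sinh y) (y * Real.sinh y) y := by
    intro y
    have := ((hasDerivAt_id y).mul (Real.hasDerivAt_cosh y)).sub (Real.hasDerivAt_sinh y)
    refine this.congr_deriv ?_
    simp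
  have hm : MonotoneOn (fun y => y * Real.cosh y - Real.sinh y) (Set.Ici 0) := by
    apply monotoneOn_of_deriv_nonneg (convex_Ici 0)
    · exact fun y _ => (hd y).continuousAt.continuousWithinAt
    · exact fun y _ => (hd y).differentiableAt.differentiableWithinAt
    · intro y hy
      rw [interior_Ici] at hy
      rw [(hd y).deriv]
      exact mul_nonneg hy.le (Real.sinh_nonneg_iff.2 hy.le)
  have := hm (Set.mem_Ici.2 le_rfl) (Set.mem_Ici.2 hx) hx
  simp at this
  linarith

lemma LS_nonneg {x : ℝ} (hx : 0 ≤ x) : 0 ≤ LS x := by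
  rcases hx.eq_or_lt with rfl | hx
  · rw [LS_zero]
  · apply Real.log_nonneg
    rw [le_div_iff₀ hx, one_mul]
    exact (Real.self_lt_sinh_iff.2 hx).le

lemma LS_le {x : ℝ} (hx : 0 ≤ x) : LS x ≤ x ^ 2 / 2 := by
  rcases hx.eq_or_lt with rfl | hx
  · rw [LS_zero]; simp
  · unfold LS
    have hs : 0 < Real.sinh x := Real.sinh_pos_iff.2 hx
    rw [Real.log_le_iff_le_exp (by positivity), div_le_iff₀ hx]
    calc Real.sinh x ≤ x * Real.cosh x := sinh_le_mul_cosh hx.le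
      _ ≤ x * Real.exp (x ^ 2 / 2) := by
        gcongr
        exact Real.cosh_le_exp_half_sq x
      _ = _ := mul_comm _ _

lemma LS_hasDerivAt {x : ℝ} (hx : 0 < x) :
    HasDerivAt LS (Real.cosh x / Real.sinh x - 1 / x) x := by
  have hs : 0 < Real.sinh x := Real.sinh_pos_iff.2 hx
  have := ((Real.hasDerivAt_sinh x).div (hasDerivAt_id x) hx.ne').log (div_pos hs hx).ne'
  refine HasDerivAt.congr_deriv (f := LS) this ?_
  simp only [id, Pi.div_apply]
  field_simp

lemma LS_continuousOn : ContinuousOn LS (Set.Ici 0) := by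
  intro x hx
  rcases (Set.mem_Ici.1 hx).eq_or_lt with rfl | hx
  · unfold ContinuousWithinAt
    rw [LS_zero]
    refine tendsto_of_tendsto_of_tendsto_of_le_of_le' (g := fun _ => (0:ℝ))
      (h := fun x : ℝ => x ^ 2 / 2) tendsto_const_nhds ?_ ?_ ?_
    · have : Continuous (fun x : ℝ => x ^ 2 / 2) := by fun_prop
      have := (this.tendsto 0).mono_left (nhdsWithin_le_nhds (s := Set.Ici 0))
      simpa using this
    · filter_upwards [self_mem_nhdsWithin] with y hy using LS_nonneg hy
    · filter_upwards [self_mem_nhdsWithin] with y hy using LS_le hy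
  · exact (LS_hasDerivAt hx).continuousAt.continuousWithinAt

lemma LS_strictConvexOn : StrictConvexOn ℝ (Set.Ici 0) LS := by
  apply StrictMonoOn.strictConvexOn_of_deriv (convex_Ici 0) LS_continuousOn
  rw [interior_Ici]
  have hd : ∀ y : ℝ, 0 < y → HasDerivAt (fun y => Real.cosh y / Real.sinh y - 1 / y)
      (1 / y ^ 2 - 1 / Real.sinh y ^ 2) y := by
    intro y hy
    have hs : 0 < Real.sinh y := Real.sinh_pos_iff.2 hy
    have := ((Real.hasDerivAt_cosh y).div (Real.hasDerivAt_sinh y) hs.ne').sub (hasDerivAt_inv hy.ne')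
    have h2 : (fun y => Real.cosh y / Real.sinh y - 1 / y)
        = Real.cosh / Real.sinh - fun y => y⁻¹ := by
      ext z; simp
    rw [h2]
    refine this.congr_deriv ?_
    have := Real.cosh_sq y
    field_simp
    rw [this]; ring
  have hm : StrictMonoOn (fun y => Real.cosh y / Real.sinh y - 1 / y) (Set.Ioi 0) := by
    apply strictMonoOn_of_deriv_pos (convex_Ioi 0)
    · exact fun y hy => (hd y hy).continuousAt.continuousWithinAt
    · intro y hy
      rw [interior_Ioi] at hy
      rw [(hd y hy).deriv, sub_pos]
      have hy : 0 < y := hy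
      have := Real.self_lt_sinh_iff.2 hy
      gcongr
  intro x hx y hy hxy
  rw [(LS_hasDerivAt hx).deriv, (LS_hasDerivAt hy).deriv]
  exact hm hx hy hxy

lemma LS_mul_lt {x s : ℝ} (hx : 0 < x) (hs : 0 < s) (hs1 : s < 1) : LS (s * x) < s * LS x := by
  have := LS_strictConvexOn.2 (Set.mem_Ici.2 le_rfl) (Set.mem_Ici.2 hx.le) hx.ne
    (sub_pos.2 hs1) hs (by ring)
  simpa [LS_zero] using this

lemma LS_large {k : ℝ} (hk : k < 1) : ∀ᶠ x in Filter.atTop, k * x ≤ LS x := by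
  have h1 := Real.isLittleO_log_id_atTop.def (c := (1 - k) / 2) (by linarith)
  filter_upwards [h1, Filter.eventually_ge_atTop (1:ℝ),
    Filter.eventually_ge_atTop (2 * Real.log 4 / (1 - k))] with x hx hx1 hx2
  have hx0 : 0 < x := by linarith
  rw [div_le_iff₀ (by linarith)] at hx2
  simp only [id, Real.norm_eq_abs, abs_of_pos hx0] at hx
  have hx := (le_abs_self _).trans hx
  have hle : Real.exp x / (4 * x) ≤ Real.sinh x / x := by
    rw [Real.sinh_eq, div_le_div_iff₀ (by positivity) hx0]
    have h2 : Real.exp (-x) ≤ 1 := Real.exp_le_one_iff.2 (by linarith)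
    have h3 := Real.add_one_le_exp x
    nlinarith
  have := Real.log_le_log (by positivity) hle
  rw [Real.log_div (by positivity) (by positivity), Real.log_exp,
    Real.log_mul (by positivity) (by positivity)] at this
  unfold LS
  linarith

lemma G₂_eq (a w₁ w₂ t : ℝ) (hw₁ : 0 < w₁) (hw₂ : 0 < w₂) (ht : 0 < t) :
    G₂ a w₁ w₂ t = (Real.exp (((w₁ + w₂) / 2 - a) * t - (LS (w₁ / 2 * t) + LS (w₂ / 2 * t))) - 1)
      / (w₁ * w₂ * t ^ 2) := by
  have key : ∀ w : ℝ, 0 < w → Real.exp (LS (w / 2 * t)) =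
      (Real.exp (w * t) - 1) / (w * t) * Real.exp (-(w / 2 * t)) := by
    intro w hw
    have hp : 0 < w / 2 * t := by positivity
    have hs : 0 < Real.sinh (w / 2 * t) := Real.sinh_pos_iff.2 hp
    unfold LS
    rw [Real.exp_log (by positivity), Real.sinh_eq]
    have e : Real.exp (w * t) = Real.exp (w / 2 * t) * Real.exp (w / 2 * t) := by
      rw [← Real.exp_add]; ring_nf
    rw [e, Real.exp_neg]
    field_simp
  have e1 : 0 < Real.exp (w₁ * t) - 1 := by
    have : 0 < w₁ * t := by positivity
    linarith [Real.add_one_le_exp (w₁ * t)]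
  have e2 : 0 < Real.exp (w₂ * t) - 1 := by
    have : 0 < w₂ * t := by positivity
    linarith [Real.add_one_le_exp (w₂ * t)]
  have e3 : Real.exp ((w₁ + w₂ - a) * t) = Real.exp (((w₁ + w₂) / 2 - a) * t) *
      (Real.exp (w₁ / 2 * t) * Real.exp (w₂ / 2 * t)) := by
    rw [← Real.exp_add, ← Real.exp_add]; ring_nf
  unfold G₂
  rw [Real.exp_sub, Real.exp_add, key w₁ hw₁, key w₂ hw₂, e3, Real.exp_neg, Real.exp_neg]
  field_simp

theorem stmt14 (w₁ w₂ a : ℝ) (hw₁ : 0 < w₁) (hw₂ : 0 < w₂)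
    (ha : 0 < a) (ha' : a < (w₁ + w₂) / 2) :
    ∃ t₀ : ℝ, 0 < t₀ ∧ G₂ a w₁ w₂ t₀ = 0 ∧
      (∀ t : ℝ, 0 < t → t < t₀ → 0 < G₂ a w₁ w₂ t) ∧
      (∀ t : ℝ, t₀ < t → G₂ a w₁ w₂ t < 0) := by
  obtain ⟨c, hc⟩ : ∃ c, c = (w₁ + w₂) / 2 - a := ⟨_, rfl⟩
  have hc0 : 0 < c := by linarith
  obtain ⟨M, hM⟩ : ∃ M : ℝ → ℝ, M = fun t => LS (w₁ / 2 * t) + LS (w₂ / 2 * t) := ⟨_, rfl⟩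
  have hG : ∀ t, 0 < t → G₂ a w₁ w₂ t = (Real.exp (c * t - M t) - 1) / (w₁ * w₂ * t ^ 2) := by
    intro t ht
    rw [G₂_eq a w₁ w₂ t hw₁ hw₂ ht, hc, hM]
  have hmul : ∀ s t, 0 < t → 0 < s → s < 1 → M (s * t) < s * M t := by
    intro s t ht hs hs1
    have h1 := LS_mul_lt (x := w₁ / 2 * t) (by positivity) hs hs1
    have h2 := LS_mul_lt (x := w₂ / 2 * t) (by positivity) hs hs1
    rw [hM]
    simp only
    rw [show w₁ / 2 * (s * t) = s * (w₁ / 2 * t) by ring,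
      show w₂ / 2 * (s * t) = s * (w₂ / 2 * t) by ring]
    linarith
  have hcont : ContinuousOn M (Set.Ici 0) := by
    rw [hM]
    apply ContinuousOn.add
    · apply LS_continuousOn.comp (by fun_prop)
      intro t ht
      have ht : 0 ≤ t := ht
      exact Set.mem_Ici.2 (by positivity)
    · apply LS_continuousOn.comp (by fun_prop)
      intro t ht
      have ht : 0 ≤ t := ht
      exact Set.mem_Ici.2 (by positivity)
  -- small point
  obtain ⟨u, hu0, hu⟩ : ∃ u, 0 < u ∧ M u ≤ c * u := by
    refine ⟨c / (w₁ ^ 2 + w₂ ^ 2), by positivity, ?_⟩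
    have hp : 0 < c / (w₁ ^ 2 + w₂ ^ 2) := by positivity
    have hq : c / (w₁ ^ 2 + w₂ ^ 2) * (w₁ ^ 2 + w₂ ^ 2) = c := by field_simp
    generalize c / (w₁ ^ 2 + w₂ ^ 2) = u at *
    have h1 := LS_le (x := w₁ / 2 * u) (by positivity)
    have h2 := LS_le (x := w₂ / 2 * u) (by positivity)
    rw [hM]
    have h3 : u * (w₁ ^ 2 + w₂ ^ 2) * u = c * u := by rw [hq]
    have h4 : 0 < c * u := by positivity
    simp only
    nlinarith
  -- large point
  obtain ⟨v, huv, hv⟩ : ∃ v, u ≤ v ∧ c * v ≤ M v := by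
    have hk : 1 - a / (w₁ + w₂) < 1 := by
      have : 0 < a / (w₁ + w₂) := by positivity
      linarith
    have hl := LS_large hk
    have t1 : Filter.Tendsto (fun t : ℝ => w₁ / 2 * t) Filter.atTop Filter.atTop :=
      Filter.tendsto_id.const_mul_atTop (by positivity)
    have t2 : Filter.Tendsto (fun t : ℝ => w₂ / 2 * t) Filter.atTop Filter.atTop :=
      Filter.tendsto_id.const_mul_atTop (by positivity)
    obtain ⟨v, h1, h2, h3⟩ := ((t1.eventually hl).and ((t2.eventually hl).and
      (Filter.eventually_ge_atTop u))).exists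
    refine ⟨v, h3, ?_⟩
    have hv0 : 0 < v := by linarith
    have h5 : (1 - a / (w₁ + w₂)) * (w₁ / 2 * v) + (1 - a / (w₁ + w₂)) * (w₂ / 2 * v)
        = (c + a / 2) * v := by
      rw [hc]; field_simp; ring
    have h6 : 0 < a * v := by positivity
    rw [hM]
    simp only
    nlinarith
  have hcont2 : ContinuousOn (fun t => M t - c * t) (Set.Icc u v) :=
    (hcont.mono fun t ht => Set.mem_Ici.2 (hu0.le.trans ht.1)).sub (by fun_prop)
  obtain ⟨t₀, ht₀, hz⟩ := intermediate_value_Icc huv hcont2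
    (show (0:ℝ) ∈ Set.Icc _ _ from ⟨by linarith, by linarith⟩)
  simp only at hz
  have hpos : 0 < t₀ := by linarith [ht₀.1]
  refine ⟨t₀, hpos, ?_, ?_, ?_⟩
  · rw [hG t₀ hpos, show c * t₀ - M t₀ = 0 by linarith]
    simp
  · intro t ht hlt
    rw [hG t ht]
    have := hmul (t / t₀) t₀ hpos (by positivity) (by rwa [div_lt_one hpos])
    rw [div_mul_cancel₀ _ hpos.ne', show M t₀ = c * t₀ by linarith,
      show t / t₀ * (c * t₀) = c * t by field_simp] at this
    have : 1 < Real.exp (c * t - M t) := Real.one_lt_exp_iff.2 (by linarith)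
    have : 0 < Real.exp (c * t - M t) - 1 := by linarith
    positivity
  · intro t hlt
    have ht : 0 < t := hpos.trans hlt
    rw [hG t ht]
    have := hmul (t₀ / t) t ht (by positivity) (by rwa [div_lt_one ht])
    rw [div_mul_cancel₀ _ ht.ne', show M t₀ = c * t₀ by linarith] at this
    have h7 : c * t < M t := by
      rw [div_mul_eq_mul_div, lt_div_iff₀ ht] at this
      nlinarith
    have : Real.exp (c * t - M t) < 1 := Real.exp_lt_one_iff.2 (by linarith)
    apply div_neg_of_neg_of_pos (by linarith) (by positivity)
end

section
/- Let w₁, w₂ > 0 and 0 < a < (w₁+w₂)/2, define G₂(a,w,t) = e^{(w₁+w₂−a)t}/((e^{w₁t}−1)(e^{w₂t}−1)) − 1/(w₁w₂t²) for t > 0, and let t₀ > 0 be such that G₂(a,w,t₀) = 0, G₂(a,w,t) > 0 for 0 < t < t₀ and G₂(a,w,t) < 0 for t > t₀. Then the function σ ↦ ∫₀^∞ G₂(a,w,t) (t/t₀)^σ (dt/t) is strictly decreasing on the interval (1,2). -/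
open MeasureTheory Real Set

lemma G2_aux (u : ℝ) (hu : 0 < u) : Real.exp u / (Real.exp u - 1) ≤ 1 + 1 / u := by
  have h := Real.add_one_lt_exp hu.ne'
  have h1 : 0 < Real.exp u - 1 := by linarith
  rw [div_le_iff₀ h1]
  have h2 : 1 ≤ 1 / u * (Real.exp u - 1) := by
    rw [one_div, inv_mul_eq_div, le_div_iff₀ hu]; linarith
  linarith

lemma G2_upper (w₁ w₂ a t : ℝ) (hw₁ : 0 < w₁) (hw₂ : 0 < w₂) (ha : 0 < a) (ht : 0 < t) :
    G₂ a w₁ w₂ t ≤ 1 + 1 / (w₁ * t) + 1 / (w₂ * t) := by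
  have hu : 0 < w₁ * t := by positivity
  have hv : 0 < w₂ * t := by positivity
  have hu1 : 0 < Real.exp (w₁ * t) - 1 := by linarith [Real.add_one_lt_exp hu.ne']
  have hv1 : 0 < Real.exp (w₂ * t) - 1 := by linarith [Real.add_one_lt_exp hv.ne']
  have h1 := G2_aux _ hu
  have h2 := G2_aux _ hv
  have hle : Real.exp ((w₁ + w₂ - a) * t) ≤ Real.exp (w₁ * t) * Real.exp (w₂ * t) := by
    rw [← Real.exp_add]
    apply Real.exp_le_exp.2
    nlinarith
  have h3 : Real.exp ((w₁ + w₂ - a) * t) / ((Real.exp (w₁ * t) - 1) * (Real.exp (w₂ * t) - 1))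
      ≤ (1 + 1 / (w₁ * t)) * (1 + 1 / (w₂ * t)) := by
    calc _ ≤ Real.exp (w₁ * t) * Real.exp (w₂ * t) /
          ((Real.exp (w₁ * t) - 1) * (Real.exp (w₂ * t) - 1)) := by gcongr
      _ = Real.exp (w₁ * t) / (Real.exp (w₁ * t) - 1) *
          (Real.exp (w₂ * t) / (Real.exp (w₂ * t) - 1)) := by rw [div_mul_div_comm]
      _ ≤ _ := by gcongr
  have h4 : 1 / (w₁ * w₂ * t ^ 2) = 1 / (w₁ * t) * (1 / (w₂ * t)) := by
    field_simp
  unfold G₂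
  rw [h4]
  linarith

lemma G2_lower (w₁ w₂ a t : ℝ) (hw₁ : 0 < w₁) (hw₂ : 0 < w₂) (ht : 0 < t) :
    - (1 / (w₁ * w₂ * t ^ 2)) ≤ G₂ a w₁ w₂ t := by
  have hu : 0 < w₁ * t := by positivity
  have hv : 0 < w₂ * t := by positivity
  have hu1 : 0 < Real.exp (w₁ * t) - 1 := by linarith [Real.add_one_lt_exp hu.ne']
  have hv1 : 0 < Real.exp (w₂ * t) - 1 := by linarith [Real.add_one_lt_exp hv.ne']
  unfold G₂
  have : 0 ≤ Real.exp ((w₁ + w₂ - a) * t) /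
    ((Real.exp (w₁ * t) - 1) * (Real.exp (w₂ * t) - 1)) := by positivity
  linarith

lemma G2_integrable (w₁ w₂ a : ℝ) (hw₁ : 0 < w₁) (hw₂ : 0 < w₂)
    (ha : 0 < a) (t₀ : ℝ) (ht₀ : 0 < t₀)
    (hzero : G₂ a w₁ w₂ t₀ = 0)
    (hpos : ∀ t : ℝ, 0 < t → t < t₀ → 0 < G₂ a w₁ w₂ t)
    (hneg : ∀ t : ℝ, t₀ < t → G₂ a w₁ w₂ t < 0) (σ : ℝ) (h1 : 1 < σ) (h2 : σ < 2) :
    IntegrableOn (fun t => G₂ a w₁ w₂ t * (t / t₀) ^ σ / t) (Ioi (0 : ℝ)) := by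
  have hm : Measurable (fun t => G₂ a w₁ w₂ t * (t / t₀) ^ σ / t) := by
    unfold G₂
    fun_prop
  rw [← Ioc_union_Ioi_eq_Ioi ht₀.le]
  refine IntegrableOn.union ?_ ?_
  · have hi : IntegrableOn (fun t : ℝ => (t₀ + 1 / w₁ + 1 / w₂) / t₀ ^ σ * t ^ (σ - 2))
        (Ioc 0 t₀) := by
      apply Integrable.const_mul
      rw [← IntegrableOn, ← intervalIntegrable_iff_integrableOn_Ioc_of_le ht₀.le]
      exact intervalIntegral.intervalIntegrable_rpow' (by linarith)
    refine Integrable.mono' hi hm.aestronglyMeasurable ?_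
    filter_upwards [ae_restrict_mem measurableSet_Ioc] with t ht
    obtain ⟨ht, ht'⟩ := ht
    have hG : 0 ≤ G₂ a w₁ w₂ t := by
      rcases ht'.lt_or_eq with h | h
      · exact (hpos t ht h).le
      · rw [h, hzero]
    have hG2 : G₂ a w₁ w₂ t ≤ (t₀ + 1 / w₁ + 1 / w₂) / t := by
      refine (G2_upper w₁ w₂ a t hw₁ hw₂ ha ht).trans ?_
      rw [le_div_iff₀ ht]
      have : (1 + 1 / (w₁ * t) + 1 / (w₂ * t)) * t = t + 1 / w₁ + 1 / w₂ := by field_simp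
      linarith
    rw [Real.norm_of_nonneg (by positivity), Real.div_rpow ht.le ht₀.le,
      Real.rpow_sub ht, Real.rpow_two]
    calc _ ≤ (t₀ + 1 / w₁ + 1 / w₂) / t * (t ^ σ / t₀ ^ σ) / t := by gcongr
      _ = _ := by field_simp
  · have hi : IntegrableOn (fun t : ℝ => 1 / (w₁ * w₂) / t₀ ^ σ * t ^ (σ - 3))
        (Ioi t₀) := by
      apply Integrable.const_mul
      exact integrableOn_Ioi_rpow_of_lt (by linarith) ht₀
    refine Integrable.mono' hi hm.aestronglyMeasurable ?_
    filter_upwards [ae_restrict_mem measurableSet_Ioi] with t ht'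
    have ht : 0 < t := ht₀.trans ht'
    have hG : |G₂ a w₁ w₂ t| ≤ 1 / (w₁ * w₂ * t ^ 2) := by
      rw [abs_of_neg (hneg t ht')]
      linarith [G2_lower w₁ w₂ a t hw₁ hw₂ ht]
    rw [norm_div, norm_mul, Real.norm_of_nonneg (r := (t / t₀) ^ σ) (by positivity),
      Real.norm_of_nonneg ht.le, Real.norm_eq_abs, Real.div_rpow ht.le ht₀.le,
      Real.rpow_sub ht, show (3 : ℝ) = ((3 : ℕ) : ℝ) by norm_num, Real.rpow_natCast]
    calc _ ≤ 1 / (w₁ * w₂ * t ^ 2) * (t ^ σ / t₀ ^ σ) / t := by gcongr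
      _ = _ := by field_simp

theorem stmt16 (w₁ w₂ a : ℝ) (hw₁ : 0 < w₁) (hw₂ : 0 < w₂)
    (ha : 0 < a) (ha' : a < (w₁ + w₂) / 2) (t₀ : ℝ) (ht₀ : 0 < t₀)
    (hzero : G₂ a w₁ w₂ t₀ = 0)
    (hpos : ∀ t : ℝ, 0 < t → t < t₀ → 0 < G₂ a w₁ w₂ t)
    (hneg : ∀ t : ℝ, t₀ < t → G₂ a w₁ w₂ t < 0) :
    StrictAntiOn
      (fun σ : ℝ => ∫ t in Set.Ioi (0 : ℝ), G₂ a w₁ w₂ t * (t / t₀) ^ σ / t)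
      (Set.Ioo (1 : ℝ) 2) := by
  intro x hx y hy hxy
  have hix := G2_integrable w₁ w₂ a hw₁ hw₂ ha t₀ ht₀ hzero hpos hneg x hx.1 hx.2
  have hiy := G2_integrable w₁ w₂ a hw₁ hw₂ ha t₀ ht₀ hzero hpos hneg y hy.1 hy.2
  have hlt : ∀ t : ℝ, 0 < t → t < t₀ → 0 < G₂ a w₁ w₂ t * (t / t₀) ^ x / t
      - G₂ a w₁ w₂ t * (t / t₀) ^ y / t := by
    intro t ht h
    have hG := hpos t ht h
    have : (t / t₀) ^ y < (t / t₀) ^ x :=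
      Real.rpow_lt_rpow_of_exponent_gt (by positivity) ((div_lt_one ht₀).2 h) hxy
    rw [sub_pos]
    gcongr
  show _ < _
  dsimp only
  rw [← sub_pos, ← integral_sub hix hiy]
  refine (setIntegral_pos_iff_support_of_nonneg_ae ?_ (hix.sub hiy)).2 ?_
  rotate_left
  · refine lt_of_lt_of_le ?_ (measure_mono (s := Ioo 0 t₀) ?_)
    · simp [ht₀]
    · intro t ht
      exact ⟨(hlt t ht.1 ht.2).ne', ht.1⟩
  · filter_upwards [ae_restrict_mem measurableSet_Ioi] with t ht
    have ht : 0 < t := ht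
    rcases lt_trichotomy t t₀ with h | h | h
    · exact (hlt t ht h).le
    · show (0 : ℝ) ≤ G₂ a w₁ w₂ t * (t / t₀) ^ x / t - G₂ a w₁ w₂ t * (t / t₀) ^ y / t
      simp [h, hzero]
    · have hG := hneg t h
      have : (t / t₀) ^ x ≤ (t / t₀) ^ y :=
        Real.rpow_le_rpow_of_exponent_le ((one_le_div ht₀).2 h.le) hxy.le
      refine sub_nonneg.2 ?_
      exact div_le_div_of_nonneg_right (mul_le_mul_of_nonpos_left this hG.le) ht.le
end
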